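/- Let ψ_0, ψ ∈ 𝒮(ℝⁿ), where ψ satisfies the moment condition of order M_ψ ≥ −1. Let ε > 0 and let λ_0, λ ∈ 𝒮(ℝⁿ) with supp 𝓕λ_0 ⊆ {ξ : |ξ|_a < 2ε} and supp 𝓕λ ⊆ {ξ : ε/2 < |ξ|_a < 2ε}. Let r = (r_1,…,r_n) with r_l > 0, let M ≥ −1 be an integer, and define for j, k ∈ ℕ₀: I_{j,k} := ∫_{ℝⁿ} |ψ_j * λ_k(z)| · ∏_{l=1}^n (1+2^{ka_l}|z_l|)^{r_l} dz (where ψ_0 is used at j = 0 and λ_0 at k = 0). Set A := max{‖D^α 𝓕ψ‖_{L_∞} : |α| ≤ M_ψ+1 or α ≤ ⌈r+2⌉}, B := max{‖(1+|ξ|)^{M+1} D^γ 𝓕ψ(ξ)‖_{L_1} : γ ≤ ⌈r+2⌉}, C := max{‖D^α 𝓕ψ_0‖_{L_∞} : |α| ≤ M_ψ+1 or α ≤ ⌈r+2⌉}, D := max{‖(1+|ξ|)^{M+1} D^γ 𝓕ψ_0(ξ)‖_{L_1} : γ ≤ ⌈r+2⌉}. Then there exists a constant c (depending only on M, M_ψ,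 r, λ_0, λ, a, n) such that I_{j,k} ≤ c·(A+B+C+D)·2^{(k−j)(M_ψ+1)a_0} for k ≤ j, and I_{j,k} ≤ c·(A+B+C+D)·2^{−(k−j)((M+1)a_0 − a·r)} for j ≤ k, where a·r := a_1r_1+…+a_nr_n. -/

import Mathlib

open MeasureTheory Complex
open scoped ENNReal NNReal BigOperators

noncomputable section

/-- Points of `ℝⁿ`, written `x = (x 0, …, x (n-1))`. -/
abbrev RV (n : ℕ) := Fin n → ℝ

/-- Tempered distributions `𝒮′(ℝⁿ)`. -/
abbrev TD (n : ℕ) := SchwartzMap (RV n) ℂ →L[ℂ] ℂ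

/-- The Fourier transform `𝓕g(ξ) = ∫ e^{-i x·ξ} g(x) dx`. -/
def FT (n : ℕ) (g : RV n → ℂ) (ξ : RV n) : ℂ :=
  ∫ x : RV n, Complex.exp (-Complex.I * ((∑ i, x i * ξ i : ℝ) : ℂ)) * g x

/-- The partial derivative `∂_i`. -/
def pderiv1 (n : ℕ) (i : Fin n) (g : RV n → ℂ) : RV n → ℂ :=
  fun x => fderiv ℝ g x (Pi.single i 1)

def pderivIter (n : ℕ) (i : Fin n) : ℕ → (RV n → ℂ) → RV n → ℂ
  | 0, g => g
  | k + 1, g => pderiv1 n i (pderivIter n i k g)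

/-- `D^α = (-i ∂_1)^{α_1} ⋯ (-i ∂_n)^{α_n}`. -/
def Dop (n : ℕ) (α : Fin n → ℕ) (g : RV n → ℂ) : RV n → ℂ :=
  fun x => (-Complex.I) ^ (∑ i, α i) *
    ((List.finRange n).foldr (fun i h => pderivIter n i (α i) h) g) x

/-- `anorm` is the anisotropic distance function `|·|_a` :
`anorm 0 = 0`, and for `x ≠ 0`, `anorm x` is the (unique) `t > 0` with
`x 1 ^ 2 / t ^ (2 a 1) + … + x n ^ 2 / t ^ (2 a n) = 1`. -/
def IsAnorm (n : ℕ) (a : Fin n → ℝ) (anorm : RV n → ℝ) : Prop :=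
  anorm 0 = 0 ∧
    ∀ x : RV n, x ≠ 0 → 0 < anorm x ∧ ∑ i, (x i : ℝ) ^ 2 / (anorm x) ^ (2 * a i) = 1

/-- Moment condition of order `M` : `D^α (𝓕ψ)(0) = 0` for all `|α| ≤ M` (void for `M = -1`). -/
def MomentCond (n : ℕ) (M : ℤ) (ψ : RV n → ℂ) : Prop :=
  ∀ α : Fin n → ℕ, (∑ i, (α i : ℤ)) ≤ M → Dop n α (FT n ψ) 0 = 0

/-- Tauberian conditions for `ε > 0` for the pair `(ψ0, ψ)`. -/
def Tauber (n : ℕ) (anorm : RV n → ℝ) (ψ0 ψ : RV n → ℂ) (ε : ℝ) : Prop :=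
  (∀ ξ, anorm ξ < 2 * ε → 0 < ‖FT n ψ0 ξ‖) ∧
    (∀ ξ, ε / 2 < anorm ξ → anorm ξ < 2 * ε → 0 < ‖FT n ψ ξ‖)

/-- The family `φ_j`, `φ_0` at `j = 0` and `φ_j(x) = 2^{j|a|} φ(2^{ja}x)` for `j ≥ 1`. -/
def fam (n : ℕ) (a : Fin n → ℝ) (φ0 φ : RV n → ℂ) : ℕ → RV n → ℂ
  | 0 => φ0
  | j + 1 => fun x =>
      (((2 : ℝ) ^ (((j : ℝ) + 1) * ∑ i, a i) : ℝ) : ℂ) *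
        φ (fun i => (2 : ℝ) ^ (((j : ℝ) + 1) * a i) * x i)

/-- Peetre–Fefferman–Stein maximal function attached to the function `F` (intended: `F = ψ_j * f`). -/
def pfs (n : ℕ) (a r : Fin n → ℝ) (F : RV n → ℂ) (j : ℕ) (x : RV n) : ℝ≥0∞ :=
  ⨆ y : RV n,
    ENNReal.ofReal (‖F y‖ / ∏ l, (1 + (2 : ℝ) ^ ((j : ℝ) * a l) * |x l - y l|) ^ (r l))

/-- Iterated-integral construction of the mixed Lebesgue norm : integrate out the
coordinates one at a time, first `x 0`, last `x (n-1)`. -/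
def mixAux (n : ℕ) (p : Fin n → ℝ≥0∞) : ℕ → ((RV n) → ℝ≥0∞) → (RV n) → ℝ≥0∞
  | 0, F => F
  | l + 1, F => fun x =>
      if h : l < n then
        (if p ⟨l, h⟩ = ∞ then
          essSup (fun t : ℝ => mixAux n p l F (Function.update x ⟨l, h⟩ t)) volume
        else
          (∫⁻ t : ℝ, (mixAux n p l F (Function.update x ⟨l, h⟩ t)) ^ (p ⟨l, h⟩).toReal) ^
            (1 / (p ⟨l, h⟩).toReal))
      else mixAux n p l F x

/-- The mixed Lebesgue quasi-norm `‖F | L_{p̄}‖` of an extended-nonnegative-valued `F`. -/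
def mixedNorm (n : ℕ) (p : Fin n → ℝ≥0∞) (F : RV n → ℝ≥0∞) : ℝ≥0∞ :=
  mixAux n p n F fun _ => 0

/-- `‖(u_k) | L_{p̄}(ℓ_q)‖`. -/
def seqNorm (n : ℕ) (p : Fin n → ℝ≥0∞) (q : ℝ≥0∞) (u : ℕ → RV n → ℝ≥0∞) : ℝ≥0∞ :=
  mixedNorm n p fun x =>
    if q = ∞ then ⨆ k, u k x else (∑' k, u k x ^ q.toReal) ^ (1 / q.toReal)

/-- Convolution of (Schwartz) functions. -/
def conv2 (n : ℕ) (f g : RV n → ℂ) (x : RV n) : ℂ := ∫ y : RV n, f y * g (x - y)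

/-- Schwartz seminorm `p_{α,β}(φ) = sup_x |x^α D^β φ(x)|`, valued in `[0,∞]`. -/
def pSemiE (n : ℕ) (α β : Fin n → ℕ) (g : RV n → ℂ) : ℝ≥0∞ :=
  ⨆ x : RV n, (‖((∏ i, x i ^ α i : ℝ) : ℂ) * Dop n β g x‖₊ : ℝ≥0∞)

/-- Schwartz seminorm `q_{N,γ}(φ) = ∫ (1+|x|²)^{N/2} |D^γ φ(x)| dx`, valued in `[0,∞]`. -/
def qSemiE (n : ℕ) (N : ℝ) (γ : Fin n → ℕ) (g : RV n → ℂ) : ℝ≥0∞ :=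
  ∫⁻ x : RV n, ENNReal.ofReal ((1 + ∑ i, (x i) ^ 2) ^ (N / 2)) * (‖Dop n γ g x‖₊ : ℝ≥0∞)

/-- Iterated Laplacian `Δ^N`. -/
def lapIter (n : ℕ) : ℕ → (RV n → ℂ) → RV n → ℂ
  | 0, g => g
  | N + 1, g => fun x => ∑ i, pderiv1 n i (pderiv1 n i (lapIter n N g)) x

/-- The box `B_{R,j} = {ξ : |ξ_k| ≤ R 2^{j a_k}}`. -/
def specBox (n : ℕ) (a : Fin n → ℝ) (R : ℝ) (j : ℕ) : Set (RV n) :=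
  {ξ | ∀ k, |ξ k| ≤ R * (2 : ℝ) ^ ((j : ℝ) * a k)}

/-- The spectral condition `supp 𝓕u ⊆ B_{R,j}` for a temperate-growth function `u`. -/
def SpecCond (n : ℕ) (a : Fin n → ℝ) (R : ℝ) (j : ℕ) (u : RV n → ℂ) : Prop :=
  ∀ φ : SchwartzMap (RV n) ℂ,
    tsupport (⇑φ) ∩ specBox n a R j = ∅ → (∫ x : RV n, u x * FT n (⇑φ) x) = 0

/-- The maximal function `u^*` of Section 3. -/
def ustar (n : ℕ) (a r : Fin n → ℝ) (R : ℝ) (j : ℕ) (u : RV n → ℂ) (x : RV n) : ℝ≥0∞ :=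
  ⨆ y : RV n,
    ENNReal.ofReal (‖u y‖ / ∏ l, (1 + R * (2 : ℝ) ^ ((j : ℝ) * a l) * |x l - y l|) ^ (r l))

open scoped FourierTransform LineDeriv

abbrev EV (n : ℕ) := EuclideanSpace ℝ (Fin n)

def eqE (n : ℕ) : EV n ≃L[ℝ] RV n := EuclideanSpace.equiv (Fin n) ℝ

lemma eqE_apply (n : ℕ) (x : EV n) (i : Fin n) : eqE n x i = x i := rfl

lemma eqE_mp (n : ℕ) : MeasurePreserving (eqE n) volume volume :=
  EuclideanSpace.volume_preserving_symm_measurableEquiv_toLp (Fin n)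

lemma integral_eqE (n : ℕ) {F : Type*} [NormedAddCommGroup F] [NormedSpace ℝ F] (g : RV n → F) :
    ∫ x, g (eqE n x) = ∫ x, g x :=
  (eqE_mp n).integral_comp (eqE n).toHomeomorph.measurableEmbedding g

def eqF (n : ℕ) : RV n ≃L[ℝ] EV n :=
  (eqE n).symm.trans (ContinuousLinearEquiv.smulLeft
    (Units.mk0 ((2 * Real.pi)⁻¹ : ℝ) (by positivity)))

lemma eqF_apply (n : ℕ) (ξ : RV n) : eqF n ξ = ((2 * Real.pi)⁻¹ : ℝ) • (eqE n).symm ξ := rfl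

/-- pull back a Schwartz function to Euclidean space -/
def pb (n : ℕ) (f : SchwartzMap (RV n) ℂ) : SchwartzMap (EV n) ℂ :=
  SchwartzMap.compCLMOfContinuousLinearEquiv ℂ (eqE n) f

lemma pb_apply (n : ℕ) (f : SchwartzMap (RV n) ℂ) (x : EV n) : pb n f x = f (eqE n x) := rfl

def FTs (n : ℕ) (f : SchwartzMap (RV n) ℂ) : SchwartzMap (RV n) ℂ :=
  SchwartzMap.compCLMOfContinuousLinearEquiv ℂ (eqF n) (𝓕 (pb n f))

lemma FTs_apply' (n : ℕ) (f : SchwartzMap (RV n) ℂ) (ξ : RV n) :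
    FTs n f ξ = 𝓕 (pb n f) (eqF n ξ) := rfl

lemma FTs_apply (n : ℕ) (f : SchwartzMap (RV n) ℂ) (ξ : RV n) : FTs n f ξ = FT n f ξ := by
  rw [FTs_apply', SchwartzMap.fourier_coe, Real.fourier_eq', FT, ← integral_eqE]
  congr 1
  ext v
  rw [pb_apply, smul_eq_mul]
  congr 2
  rw [eqF_apply, inner_smul_right]
  have : inner ℝ v ((eqE n).symm ξ) = ∑ i, (eqE n v) i * ξ i := by
    rw [PiLp.inner_apply]
    refine Finset.sum_congr rfl fun i _ => ?_
    have : ((eqE n).symm ξ) i = ξ i := rfl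
    rw [this, eqE_apply]
    simp [mul_comm]
  rw [this]
  push_cast
  have : (Real.pi : ℂ) ≠ 0 := by exact_mod_cast Real.pi_ne_zero
  field_simp

lemma FTs_coe (n : ℕ) (f : SchwartzMap (RV n) ℂ) : ⇑(FTs n f) = FT n f :=
  funext (FTs_apply n f)

/-- multiplication by a coordinate -/
def Xc (n : ℕ) (i : Fin n) (f : SchwartzMap (RV n) ℂ) : SchwartzMap (RV n) ℂ :=
  (-Complex.I) • SchwartzMap.smulLeftCLM ℂ (fun x : RV n => x i) f

lemma tg_coord (n : ℕ) (i : Fin n) : (fun x : RV n => x i).HasTemperateGrowth :=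
  (ContinuousLinearMap.proj (R := ℝ) (φ := fun _ : Fin n => ℝ) i).hasTemperateGrowth

lemma Xc_apply (n : ℕ) (i : Fin n) (f : SchwartzMap (RV n) ℂ) (x : RV n) :
    Xc n i f x = (-Complex.I) * ((x i : ℝ) * f x) := by
  simp [Xc, SchwartzMap.smulLeftCLM_apply_apply (tg_coord n i)]

/-- partial derivative -/
def dS (n : ℕ) (i : Fin n) (f : SchwartzMap (RV n) ℂ) : SchwartzMap (RV n) ℂ :=
  ∂_{(Pi.single i 1 : RV n)} f

lemma dS_coe (n : ℕ) (i : Fin n) (f : SchwartzMap (RV n) ℂ) :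
    ⇑(dS n i f) = pderiv1 n i f := by
  ext x
  exact SchwartzMap.lineDerivOp_apply_eq_fderiv _ _ _

lemma dS_FTs (n : ℕ) (i : Fin n) (f : SchwartzMap (RV n) ℂ) :
    dS n i (FTs n f) = FTs n (Xc n i f) := by
  rw [dS, FTs, SchwartzMap.lineDerivOp_compCLMOfContinuousLinearEquiv,
    SchwartzMap.lineDerivOp_fourier_eq, FTs]
  congr 2
  ext x
  have : (inner ℝ · (eqF n (Pi.single i 1)) : EV n → ℝ).HasTemperateGrowth := by fun_prop
  rw [pb_apply, Xc_apply]
  simp only [smul_apply, SchwartzMap.smulLeftCLM_apply_apply this, pb_apply]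
  rw [eqF_apply, inner_smul_right]
  have : inner ℝ x ((eqE n).symm (Pi.single i 1)) = (eqE n x) i := by
    rw [PiLp.inner_apply, Finset.sum_eq_single i]
    · have : ((eqE n).symm (Pi.single i 1)) i = 1 := by
        show (Pi.single i 1 : RV n) i = 1
        simp
      rw [this, eqE_apply]; simp
    · intro b _ hb
      have : ((eqE n).symm (Pi.single i 1)) b = 0 := by
        show (Pi.single i 1 : RV n) b = 0
        simp [hb]
      rw [this]; simp
    · simp
  rw [this]
  simp only [smul_eq_mul, real_smul]
  push_cast
  have : (Real.pi : ℂ) ≠ 0 := by exact_mod_cast Real.pi_ne_zero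
  field_simp

lemma FTs_inv_bound (n : ℕ) : ∃ c : ℝ≥0∞, c ≠ ∞ ∧ ∀ (f : SchwartzMap (RV n) ℂ) (z : RV n),
    ‖f z‖ₑ ≤ c * ∫⁻ ξ, ‖FTs n f ξ‖ₑ := by
  refine ⟨ENNReal.ofReal |((2 * Real.pi) ^ Module.finrank ℝ (EV n))⁻¹|, ENNReal.ofReal_ne_top, ?_⟩
  intro f z
  have h1 : f z = (𝓕⁻ (𝓕 (pb n f))) ((eqE n).symm z) := by
    rw [FourierTransform.fourierInv_fourier_eq, pb_apply]; simp
  have h2 : ‖f z‖ ≤ ∫ w, ‖𝓕 (pb n f) w‖ := by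
    rw [h1, SchwartzMap.fourierInv_coe, Real.fourierInv_eq]
    refine (norm_integral_le_integral_norm _).trans (le_of_eq ?_)
    simp
  have h3 : ∫ w, ‖𝓕 (pb n f) w‖ = |((2 * Real.pi) ^ Module.finrank ℝ (EV n))⁻¹| * ∫ ξ, ‖FTs n f ξ‖ := by
    rw [← integral_eqE n (fun ξ => ‖FTs n f ξ‖)]
    have := MeasureTheory.Measure.integral_comp_smul (volume : Measure (EV n))
      (fun w => ‖FTs n f (eqE n w)‖) (2 * Real.pi)
    rw [smul_eq_mul] at this
    rw [← this]
    congr 1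
    ext w
    rw [FTs_apply', eqF_apply]
    congr 2
    rw [map_smul, ContinuousLinearEquiv.map_smul, ContinuousLinearEquiv.symm_apply_apply, smul_smul, inv_mul_cancel₀ (by positivity), one_smul]
  rw [h3] at h2
  rw [← ofReal_norm, ← ofReal_integral_norm_eq_lintegral_enorm (FTs n f).integrable,
    ← ENNReal.ofReal_mul (abs_nonneg _)]
  exact ENNReal.ofReal_le_ofReal h2

/-- convolution of Schwartz functions as Schwartz function -/
def convS (n : ℕ) (f g : SchwartzMap (RV n) ℂ) : SchwartzMap (RV n) ℂ :=
  SchwartzMap.compCLMOfContinuousLinearEquiv ℂ (eqE n).symm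
    (SchwartzMap.convolution (ContinuousLinearMap.mul ℂ ℂ) (pb n f) (pb n g))

lemma convS_apply (n : ℕ) (f g : SchwartzMap (RV n) ℂ) (z : RV n) :
    convS n f g z = conv2 n f g z := by
  show SchwartzMap.convolution (ContinuousLinearMap.mul ℂ ℂ) (pb n f) (pb n g) ((eqE n).symm z) = _
  rw [SchwartzMap.convolution_apply, MeasureTheory.convolution, conv2, ← integral_eqE]
  congr 1

lemma FTs_convS (n : ℕ) (f g : SchwartzMap (RV n) ℂ) (ξ : RV n) :
    FTs n (convS n f g) ξ = FTs n f ξ * FTs n g ξ := by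
  have : pb n (convS n f g) =
      SchwartzMap.convolution (ContinuousLinearMap.mul ℂ ℂ) (pb n f) (pb n g) := by
    ext x
    simp [pb, convS]
  rw [FTs_apply', this, SchwartzMap.fourier_convolution, SchwartzMap.pairing_apply_apply]
  rfl
def dL (n : ℕ) (L : List (Fin n)) (u : SchwartzMap (RV n) ℂ) : SchwartzMap (RV n) ℂ :=
  L.foldr (dS n) u

lemma dL_nil (n : ℕ) (u : SchwartzMap (RV n) ℂ) : dL n [] u = u := rfl
lemma dL_cons (n : ℕ) (i : Fin n) (L : List (Fin n)) (u : SchwartzMap (RV n) ℂ) :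
    dL n (i :: L) u = dS n i (dL n L u) := rfl
lemma dL_append (n : ℕ) (L L' : List (Fin n)) (u : SchwartzMap (RV n) ℂ) :
    dL n (L ++ L') u = dL n L (dL n L' u) := by
  simp [dL, List.foldr_append]

lemma dS_comm (n : ℕ) (i j : Fin n) (u : SchwartzMap (RV n) ℂ) :
    dS n i (dS n j u) = dS n j (dS n i u) := by
  ext x
  have key : ∀ i j : Fin n, dS n i (dS n j u) x =
      fderiv ℝ (fderiv ℝ u) x (Pi.single i 1) (Pi.single j 1) := by
    intro i j
    rw [dS_coe, pderiv1, dS_coe]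
    unfold pderiv1
    have hd : DifferentiableAt ℝ (fderiv ℝ u) x :=
      ((u.smooth 2).fderiv_right (m := 1) (by norm_num)).differentiable (by norm_num) x
    rw [fderiv_clm_apply hd (differentiableAt_const _)]
    simp
  rw [key, key]
  have : IsSymmSndFDerivAt ℝ u x :=
    (u.smooth 2).contDiffAt.isSymmSndFDerivAt (by simp)
  exact this _ _

lemma dL_perm (n : ℕ) {L L' : List (Fin n)} (h : L.Perm L') (u : SchwartzMap (RV n) ℂ) :
    dL n L u = dL n L' u := by
  have : LeftCommutative (dS n) := ⟨fun i j u => dS_comm n i j u⟩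
  exact h.foldr_eq u

def LA (n : ℕ) (α : Fin n → ℕ) : List (Fin n) :=
  (List.finRange n).flatMap fun i => List.replicate (α i) i

lemma LA_length (n : ℕ) (α : Fin n → ℕ) : (LA n α).length = ∑ i, α i := by
  simp [LA, List.length_flatMap, ← List.ofFn_eq_map, List.sum_ofFn]

lemma LA_count (n : ℕ) (α : Fin n → ℕ) (i : Fin n) : (LA n α).count i = α i := by
  rw [LA, List.count_flatMap, ← List.ofFn_eq_map, List.sum_ofFn, Finset.sum_eq_single i]
  · simp
  · intro b _ hb
    simp [List.count_replicate, hb]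
  · simp

lemma LA_prod (n : ℕ) (α : Fin n → ℕ) {R : Type*} [CommMonoid R] (f : Fin n → R) :
    ((LA n α).map f).prod = ∏ i, f i ^ α i := by
  rw [LA, List.map_flatMap, List.flatMap, List.prod_flatten, List.map_map,
    ← List.ofFn_eq_map, List.prod_ofFn]
  simp

lemma LA_perm (n : ℕ) (L : List (Fin n)) : L.Perm (LA n fun i => L.count i) := by
  rw [List.perm_iff_count]
  intro i
  rw [LA_count]

lemma Dop_eq (n : ℕ) (α : Fin n → ℕ) (u : SchwartzMap (RV n) ℂ) (x : RV n) :
    Dop n α u x = (-Complex.I) ^ (∑ i, α i) * dL n (LA n α) u x := by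
  rw [Dop]
  congr 1
  have h1 : ∀ (i : Fin n) (k : ℕ) (v : SchwartzMap (RV n) ℂ),
      pderivIter n i k v = dL n (List.replicate k i) v := by
    intro i k v
    induction k with
    | zero => rfl
    | succ k ih => rw [pderivIter, ih, List.replicate_succ, dL_cons, dS_coe]
  have h2 : ∀ l : List (Fin n),
      l.foldr (fun i h => pderivIter n i (α i) h) (⇑u) =
        ⇑(dL n (l.flatMap fun i => List.replicate (α i) i) u) := by
    intro l
    induction l with
    | nil => rfl
    | cons i l ih => rw [List.foldr_cons, ih, h1, List.flatMap_cons, dL_append]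
  rw [h2]; rfl

lemma dL_enorm (n : ℕ) (L : List (Fin n)) (u : SchwartzMap (RV n) ℂ) (x : RV n) :
    ‖dL n L u x‖ₑ = (‖Dop n (fun i => L.count i) u x‖₊ : ℝ≥0∞) := by
  rw [Dop_eq, dL_perm n (LA_perm n L)]
  simp [enorm]

lemma sum_count (n : ℕ) (L : List (Fin n)) : ∑ i, L.count i = L.length := by
  rw [(LA_perm n L).length_eq, LA_length]

def mulS (n : ℕ) (u v : SchwartzMap (RV n) ℂ) : SchwartzMap (RV n) ℂ :=
  SchwartzMap.pairing (ContinuousLinearMap.mul ℂ ℂ) u v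

lemma mulS_apply (n : ℕ) (u v : SchwartzMap (RV n) ℂ) (x : RV n) : mulS n u v x = u x * v x := by
  simp [mulS, SchwartzMap.pairing_apply_apply]

lemma dS_mulS (n : ℕ) (i : Fin n) (u v : SchwartzMap (RV n) ℂ) (x : RV n) :
    dS n i (mulS n u v) x = mulS n (dS n i u) v x + mulS n u (dS n i v) x := by
  have : ⇑(mulS n u v) = fun y => u y * v y := funext (mulS_apply n u v)
  simp only [mulS_apply]
  rw [dS_coe, dS_coe, dS_coe, pderiv1, pderiv1, pderiv1, this,
    fderiv_fun_mul u.differentiableAt v.differentiableAt]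
  simp
  ring

def splits {α : Type*} : List α → List (List α × List α)
  | [] => [([], [])]
  | i :: L => (splits L).map (fun p => (i :: p.1, p.2)) ++ (splits L).map (fun p => (p.1, i :: p.2))

lemma splits_count {α : Type*} [DecidableEq α] (L : List α) :
    ∀ p ∈ splits L, ∀ a, p.1.count a ≤ L.count a ∧ p.2.count a ≤ L.count a := by
  induction L with
  | nil => simp [splits]
  | cons i L ih =>
    intro p hp a
    simp only [splits, List.mem_append, List.mem_map] at hp
    rcases hp with ⟨q, hq, rfl⟩ | ⟨q, hq, rfl⟩
    · have := ih q hq a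
      simp only [List.count_cons]
      omega
    · have := ih q hq a
      simp only [List.count_cons]
      omega

lemma dS_listsum (n : ℕ) (i : Fin n) {β : Type*} (l : List β) (f : β → SchwartzMap (RV n) ℂ) :
    dS n i (l.map f).sum = (l.map fun b => dS n i (f b)).sum := by
  induction l with
  | nil => simp [dS]
  | cons b l ih =>
    simp only [List.map_cons, List.sum_cons]
    rw [← ih]
    simp [dS, LineDeriv.lineDerivOp_add]

lemma leibniz (n : ℕ) (L : List (Fin n)) (u v : SchwartzMap (RV n) ℂ) :
    dL n L (mulS n u v) = ((splits L).map fun p => mulS n (dL n p.1 u) (dL n p.2 v)).sum := by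
  induction L with
  | nil => simp [splits, dL_nil]
  | cons i L ih =>
    rw [dL_cons, ih, dS_listsum, splits, List.map_append, List.sum_append, List.map_map,
      List.map_map, ← List.sum_map_add]
    congr 2
    ext p x
    rw [dS_mulS]
    rfl

lemma leibniz_bound (n : ℕ) (L : List (Fin n)) (u v : SchwartzMap (RV n) ℂ) :
    ∫⁻ x, ‖dL n L (mulS n u v) x‖ₑ ≤
      ((splits L).map fun p => ∫⁻ x, ‖dL n p.1 u x‖ₑ * ‖dL n p.2 v x‖ₑ).sum := by
  rw [leibniz]
  induction splits L with
  | nil => simp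
  | cons p l ih =>
    simp only [List.map_cons, List.sum_cons]
    refine le_trans ?_ (add_le_add_right ih _)
    rw [← lintegral_add_left (by fun_prop)]
    refine lintegral_mono fun x => ?_
    simp only [add_apply, mulS_apply]
    refine (enorm_add_le _ _).trans ?_
    rw [enorm_mul]

def dilE (n : ℕ) (s : Fin n → ℝ) (hs : ∀ i, 0 < s i) : RV n ≃L[ℝ] RV n :=
  ContinuousLinearEquiv.piCongrRight fun i =>
    ContinuousLinearEquiv.smulLeft (Units.mk0 (s i) (hs i).ne')

lemma dilE_apply (n : ℕ) (s : Fin n → ℝ) (hs : ∀ i, 0 < s i) (x : RV n) :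
    dilE n s hs x = fun i => s i * x i := rfl

def dilS (n : ℕ) (s : Fin n → ℝ) (hs : ∀ i, 0 < s i) (u : SchwartzMap (RV n) ℂ) :
    SchwartzMap (RV n) ℂ := SchwartzMap.compCLMOfContinuousLinearEquiv ℂ (dilE n s hs) u

lemma dilS_apply (n : ℕ) (s : Fin n → ℝ) (hs : ∀ i, 0 < s i) (u : SchwartzMap (RV n) ℂ)
    (x : RV n) : dilS n s hs u x = u (fun i => s i * x i) := rfl

lemma dS_dilS (n : ℕ) (s : Fin n → ℝ) (hs : ∀ i, 0 < s i) (u : SchwartzMap (RV n) ℂ) (i : Fin n) :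
    dS n i (dilS n s hs u) = (s i) • dilS n s hs (dS n i u) := by
  rw [dS, dilS, SchwartzMap.lineDerivOp_compCLMOfContinuousLinearEquiv]
  have : dilE n s hs (Pi.single i 1) = s i • (Pi.single i 1 : RV n) := by
    rw [dilE_apply]
    ext j
    by_cases h : j = i
    · subst h; simp
    · simp [h]
  rw [this, LineDeriv.lineDerivOp_left_smul]
  ext x
  rfl

lemma dL_dilS (n : ℕ) (s : Fin n → ℝ) (hs : ∀ i, 0 < s i) (u : SchwartzMap (RV n) ℂ)
    (L : List (Fin n)) :
    dL n L (dilS n s hs u) = (L.map s).prod • dilS n s hs (dL n L u) := by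
  induction L with
  | nil => simp [dL_nil]
  | cons i L ih =>
    rw [dL_cons, ih, dL_cons, List.map_cons, List.prod_cons]
    have : dS n i ((L.map s).prod • dilS n s hs (dL n L u)) =
      (L.map s).prod • dS n i (dilS n s hs (dL n L u)) := by
      simp [dS, LineDeriv.lineDerivOp_smul]
    rw [this, dS_dilS, smul_smul, mul_comm]

lemma dL_dilS_enorm (n : ℕ) (s : Fin n → ℝ) (hs : ∀ i, 0 < s i) (u : SchwartzMap (RV n) ℂ)
    (L : List (Fin n)) (x : RV n) :
    ‖dL n L (dilS n s hs u) x‖ = (L.map s).prod * ‖dL n L u (fun i => s i * x i)‖ := by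
  rw [dL_dilS, smul_apply, dilS_apply, norm_smul, Real.norm_of_nonneg]
  apply List.prod_nonneg
  simp only [List.mem_map]
  rintro _ ⟨i, _, rfl⟩
  exact (hs i).le

lemma dL_FTs (n : ℕ) (L : List (Fin n)) (f : SchwartzMap (RV n) ℂ) :
    ∃ g : SchwartzMap (RV n) ℂ, dL n L (FTs n f) = FTs n g ∧
      ∀ x, ‖g x‖ = (L.map fun i => |x i|).prod * ‖f x‖ := by
  induction L with
  | nil => exact ⟨f, rfl, by simp⟩
  | cons i L ih =>
    obtain ⟨g, hg, hx⟩ := ih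
    refine ⟨Xc n i g, by rw [dL_cons, hg, dS_FTs], fun x => ?_⟩
    rw [Xc_apply]
    simp [hx, mul_assoc]

lemma taylor (n : ℕ) (u : SchwartzMap (RV n) ℂ) (m : ℕ) (A : ℝ) (hA : 0 ≤ A)
    (h0 : ∀ L : List (Fin n), L.length < m → dL n L u 0 = 0)
    (h1 : ∀ L : List (Fin n), L.length = m → ∀ x, ‖dL n L u x‖ ≤ A) :
    ∀ (d : ℕ) (L : List (Fin n)), L.length + d = m → ∀ x, ‖dL n L u x‖ ≤ (n * ‖x‖) ^ d * A := by
  intro d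
  induction d with
  | zero => intro L hL x; simpa using h1 L (by simpa using hL) x
  | succ d ih =>
    intro L hL x
    have hfd : ∀ y ∈ Metric.closedBall (0 : RV n) ‖x‖, ‖fderiv ℝ (dL n L u) y‖ ≤ n * ((n * ‖x‖) ^ d * A) := by
      intro y hy
      have hy' : ‖y‖ ≤ ‖x‖ := by simpa using hy
      refine ContinuousLinearMap.opNorm_le_bound _ (by positivity) fun v => ?_
      have hv : v = ∑ i, v i • (Pi.single i 1 : RV n) := by
        ext j
        simp [Finset.sum_apply, Pi.single_apply]
      conv_lhs => rw [hv]
      rw [map_sum]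
      refine (norm_sum_le _ _).trans ?_
      have : ∀ i ∈ Finset.univ, ‖fderiv ℝ (dL n L u) y (v i • (Pi.single i 1 : RV n))‖ ≤
          ((n * ‖x‖) ^ d * A) * ‖v‖ := by
        intro i _
        rw [map_smul, norm_smul, mul_comm]
        have e : fderiv ℝ (dL n L u) y (Pi.single i 1) = dL n (i :: L) u y := by
          rw [dL_cons, dS_coe]; rfl
        rw [e]
        refine mul_le_mul ?_ (norm_le_pi_norm v i) (norm_nonneg _) (by positivity)
        refine (ih (i :: L) (by simp; omega) y).trans ?_
        gcongr
      refine (Finset.sum_le_sum this).trans ?_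
      simp [mul_assoc]
    have := (convex_closedBall (0 : RV n) ‖x‖).norm_image_sub_le_of_norm_fderiv_le
      (fun y _ => (dL n L u).differentiableAt) hfd (by simp : (0 : RV n) ∈ Metric.closedBall (0 : RV n) ‖x‖)
      (by simp : x ∈ Metric.closedBall (0 : RV n) ‖x‖)
    rw [h0 L (by omega), sub_zero, sub_zero] at this
    refine this.trans (le_of_eq ?_)
    ring
lemma dil_map (n : ℕ) (s : Fin n → ℝ) (hs : ∀ i, 0 < s i) :
    ENNReal.ofReal (∏ i, s i) • Measure.map (dilE n s hs) volume = (volume : Measure (RV n)) := by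
  have hd : Matrix.det (Matrix.diagonal s) = ∏ i, s i := Matrix.det_diagonal
  have hp : 0 < ∏ i, s i := Finset.prod_pos fun i _ => hs i
  have := Real.smul_map_diagonal_volume_pi (D := s) (by rw [hd]; exact hp.ne')
  rw [hd, abs_of_pos hp] at this
  have e : (⇑(Matrix.toLin' (Matrix.diagonal s)) : RV n → RV n) = dilE n s hs := by
    ext x i
    simp [Matrix.mulVec_diagonal, dilE_apply]
  rwa [e] at this

lemma dilE_me (n : ℕ) (s : Fin n → ℝ) (hs : ∀ i, 0 < s i) : MeasurableEmbedding (dilE n s hs) :=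
  (dilE n s hs).toHomeomorph.measurableEmbedding

lemma dil_lintegral (n : ℕ) (s : Fin n → ℝ) (hs : ∀ i, 0 < s i) (f : RV n → ℝ≥0∞) :
    ENNReal.ofReal (∏ i, s i) * ∫⁻ x : RV n, f (fun i => s i * x i) = ∫⁻ x, f x := by
  conv_rhs => rw [← dil_map n s hs]
  rw [lintegral_smul_measure,
    (dilE_me n s hs).lintegral_map]
  rfl

lemma dil_integral (n : ℕ) (s : Fin n → ℝ) (hs : ∀ i, 0 < s i) (f : RV n → ℂ) :
    ((∏ i, s i : ℝ) : ℂ) * ∫ x : RV n, f (fun i => s i * x i) = ∫ x, f x := by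
  conv_rhs => rw [← dil_map n s hs]
  rw [integral_smul_measure,
    (dilE_me n s hs).integral_map,
    ENNReal.toReal_ofReal (Finset.prod_nonneg fun i _ => (hs i).le)]
  rw [real_smul]
  rfl

def Sc (n : ℕ) (s : Fin n → ℝ) (hs : ∀ i, 0 < s i) (u : SchwartzMap (RV n) ℂ) :
    SchwartzMap (RV n) ℂ := (∏ i, s i) • dilS n s hs u

lemma Sc_apply (n : ℕ) (s : Fin n → ℝ) (hs : ∀ i, 0 < s i) (u : SchwartzMap (RV n) ℂ) (x : RV n) :
    Sc n s hs u x = ((∏ i, s i : ℝ) : ℂ) * u (fun i => s i * x i) := by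
  simp only [Sc, smul_apply, real_smul, dilS_apply]

lemma FTs_Sc (n : ℕ) (s : Fin n → ℝ) (hs : ∀ i, 0 < s i) (u : SchwartzMap (RV n) ℂ) (ξ : RV n) :
    FTs n (Sc n s hs u) ξ = FTs n u (fun i => (s i)⁻¹ * ξ i) := by
  rw [FTs_apply, FTs_apply, FT, FT]
  conv_rhs => rw [← dil_integral n s hs, ← integral_const_mul]
  congr 1
  ext x
  rw [Sc_apply]
  have : ∑ i, s i * x i * ((s i)⁻¹ * ξ i) = ∑ i, x i * ξ i := by
    refine Finset.sum_congr rfl fun i _ => ?_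
    have := (hs i).ne'
    field_simp
  rw [this]
  ring

lemma wt_bound (r : ℝ) (y : ℝ) (hy : 0 ≤ y) :
    (1 + y) ^ r ≤ (1 + y) ^ (-2 : ℝ) * (2 ^ ⌈r + 2⌉₊ * (1 + y ^ ⌈r + 2⌉₊)) := by
  have h1 : (1 + y) ^ r = (1 + y) ^ (-2 : ℝ) * (1 + y) ^ (r + 2) := by
    rw [← Real.rpow_add (by positivity)]; congr 1; ring
  rw [h1]
  gcongr
  have h2 : (1 + y) ^ (r + 2) ≤ (1 + y) ^ ((⌈r + 2⌉₊ : ℕ) : ℝ) :=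
    Real.rpow_le_rpow_of_exponent_le (by linarith) (Nat.le_ceil _)
  rw [Real.rpow_natCast] at h2
  refine h2.trans ((add_pow_le zero_le_one hy _).trans ?_)
  rw [one_pow]
  gcongr
  · norm_num
  · omega

def NS (n : ℕ) (r : Fin n → ℝ) (S : Finset (Fin n)) (i : Fin n) : ℕ :=
  if i ∈ S then ⌈r i + 2⌉₊ else 0

lemma wt_prod (n : ℕ) (r : Fin n → ℝ) (z : RV n) :
    ∏ l, (1 + |z l|) ^ (r l) ≤ (∏ l, (1 + |z l|) ^ (-2 : ℝ)) * ((∏ l, (2:ℝ) ^ ⌈r l + 2⌉₊) *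
      ∑ S : Finset (Fin n), ∏ i, |z i| ^ NS n r S i) := by
  have : ∑ S : Finset (Fin n), ∏ i, |z i| ^ NS n r S i = ∏ l, (1 + |z l| ^ ⌈r l + 2⌉₊) := by
    rw [Finset.prod_one_add, Finset.powerset_univ]
    refine Finset.sum_congr rfl fun S _ => ?_
    rw [← Finset.prod_subset (Finset.subset_univ S)]
    · refine Finset.prod_congr rfl fun i hi => ?_
      simp [NS, hi]
    · intro i _ hi
      simp [NS, hi]
  rw [this, ← Finset.prod_mul_distrib, ← Finset.prod_mul_distrib]
  exact Finset.prod_le_prod (fun i _ => by positivity) fun i _ => wt_bound _ _ (abs_nonneg _)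

lemma K0 (n : ℕ) (r : Fin n → ℝ) : ∃ K : ℝ≥0∞, K ≠ ∞ ∧ ∀ h : SchwartzMap (RV n) ℂ,
    ∫⁻ z, ‖h z‖ₑ * ∏ l, ENNReal.ofReal ((1 + |z l|) ^ (r l)) ≤
      K * ∑ S : Finset (Fin n), ∫⁻ ξ, ‖dL n (LA n (NS n r S)) (FTs n h) ξ‖ₑ := by
  obtain ⟨c, hc, hb⟩ := FTs_inv_bound n
  have hint : Integrable (fun z : RV n => ∏ l, (1 + |z l|) ^ (-2 : ℝ)) := by
    refine Integrable.fintype_prod (f := fun _ (y : ℝ) => (1 + |y|) ^ (-2 : ℝ)) fun _ => ?_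
    exact integrable_one_add_norm (E := ℝ) (r := 2) (by simp)
  refine ⟨(∫⁻ z : RV n, ENNReal.ofReal (∏ l, (1 + |z l|) ^ (-2 : ℝ))) *
    (ENNReal.ofReal (∏ l, (2:ℝ) ^ ⌈r l + 2⌉₊) * c), ?_, fun h => ?_⟩
  · refine ENNReal.mul_ne_top ?_ (ENNReal.mul_ne_top ENNReal.ofReal_ne_top hc)
    exact (hint.lintegral_lt_top).ne
  · rw [mul_assoc, ← lintegral_mul_const' _ _ ?_]
    swap
    · refine ENNReal.mul_ne_top (ENNReal.mul_ne_top ENNReal.ofReal_ne_top hc) ?_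
      refine (ENNReal.sum_lt_top.2 fun S _ => ?_).ne
      exact (SchwartzMap.integrable _).2
    refine lintegral_mono fun z => ?_
    have h1 : ∀ S : Finset (Fin n), ‖h z‖ₑ * ENNReal.ofReal (∏ i, |z i| ^ NS n r S i) ≤
        c * ∫⁻ ξ, ‖dL n (LA n (NS n r S)) (FTs n h) ξ‖ₑ := by
      intro S
      obtain ⟨g, hg, hx⟩ := dL_FTs n (LA n (NS n r S)) h
      rw [hg]
      refine le_trans (le_of_eq ?_) (hb g z)
      rw [← ofReal_norm, ← ofReal_norm, hx, LA_prod, mul_comm, ENNReal.ofReal_mul]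
      exact Finset.prod_nonneg fun i _ => by positivity
    rw [← ENNReal.ofReal_prod_of_nonneg (fun i _ => by positivity)]
    calc _ ≤ ‖h z‖ₑ * ENNReal.ofReal ((∏ l, (1 + |z l|) ^ (-2 : ℝ)) * ((∏ l, (2:ℝ) ^ ⌈r l + 2⌉₊) *
      ∑ S : Finset (Fin n), ∏ i, |z i| ^ NS n r S i)) := by
            gcongr; exact wt_prod n r z
      _ = ENNReal.ofReal (∏ l, (1 + |z l|) ^ (-2 : ℝ)) * (ENNReal.ofReal (∏ l, (2:ℝ) ^ ⌈r l + 2⌉₊) *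
          ∑ S : Finset (Fin n), ‖h z‖ₑ * ENNReal.ofReal (∏ i, |z i| ^ NS n r S i)) := by
            rw [ENNReal.ofReal_mul (Finset.prod_nonneg fun i _ => by positivity),
              ENNReal.ofReal_mul (Finset.prod_nonneg fun i _ => by positivity),
              ENNReal.ofReal_sum_of_nonneg (fun S _ => Finset.prod_nonneg fun i _ => by positivity),
              ← Finset.mul_sum]
            ring
      _ ≤ _ := by
            rw [mul_assoc, Finset.mul_sum _ _ c]
            exact mul_le_mul' le_rfl (mul_le_mul' le_rfl (Finset.sum_le_sum fun S _ => h1 S))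

lemma K2 (n : ℕ) (r : Fin n → ℝ) : ∃ K : ℝ≥0∞, K ≠ ∞ ∧
    ∀ (s : Fin n → ℝ) (_ : ∀ i, 0 < s i) (h u v : SchwartzMap (RV n) ℂ) (Q : ℝ≥0∞),
      (∀ ξ : RV n, FTs n h (fun i => s i * ξ i) = u ξ * v ξ) →
      (∀ L1 L2 : List (Fin n), (∀ l, L1.count l ≤ ⌈r l + 2⌉₊) → (∀ l, L2.count l ≤ ⌈r l + 2⌉₊) →
        ∫⁻ x, ‖dL n L1 u x‖ₑ * ‖dL n L2 v x‖ₑ ≤ Q) →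
      ∫⁻ z, ‖h z‖ₑ * ∏ l, ENNReal.ofReal ((1 + s l * |z l|) ^ (r l)) ≤ K * Q := by
  obtain ⟨K, hK, hb⟩ := K0 n r
  refine ⟨K * ∑ S : Finset (Fin n), ((splits (LA n (NS n r S))).length : ℝ≥0∞), ?_, ?_⟩
  · exact ENNReal.mul_ne_top hK (ENNReal.sum_lt_top.2 fun S _ => ENNReal.natCast_lt_top _).ne
  intro s hs h u v Q huv hQ
  have hs' : ∀ i, 0 < (s i)⁻¹ := fun i => inv_pos.2 (hs i)
  have e1 : FTs n (Sc n (fun i => (s i)⁻¹) hs' h) = mulS n u v := by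
    ext ξ
    rw [FTs_Sc, mulS_apply, ← huv]
    simp
  have e2 : ∫⁻ z, ‖h z‖ₑ * ∏ l, ENNReal.ofReal ((1 + s l * |z l|) ^ (r l)) =
      ∫⁻ z, ‖Sc n (fun i => (s i)⁻¹) hs' h z‖ₑ * ∏ l, ENNReal.ofReal ((1 + |z l|) ^ (r l)) := by
    conv_rhs => rw [← dil_lintegral n s hs, ← lintegral_const_mul' _ _ ENNReal.ofReal_ne_top]
    refine lintegral_congr fun z => ?_
    have hp : 0 < ∏ i, s i := Finset.prod_pos fun i _ => hs i
    have e3 : (fun i => (s i)⁻¹ * (s i * z i)) = z := by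
      ext i
      have := (hs i).ne'
      field_simp
    have e4 : ∀ l, |s l * z l| = s l * |z l| := fun l => by rw [abs_mul, abs_of_pos (hs l)]
    simp only [Sc_apply, e3, e4]
    rw [enorm_mul, ← mul_assoc, ← mul_assoc]
    have e5 : ENNReal.ofReal (∏ i, s i) * ‖((∏ i, (s i)⁻¹ : ℝ) : ℂ)‖ₑ = 1 := by
      rw [← ofReal_norm, Complex.norm_real, Finset.prod_inv_distrib, Real.norm_of_nonneg (by positivity),
        ← ENNReal.ofReal_mul hp.le, mul_inv_cancel₀ hp.ne', ENNReal.ofReal_one]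
    rw [e5, one_mul]
  rw [e2]
  refine (hb _).trans ?_
  rw [e1, mul_assoc, Finset.sum_mul]
  gcongr with S
  refine (leibniz_bound n _ u v).trans ?_
  have : ∀ x ∈ (splits (LA n (NS n r S))).map
      (fun p => ∫⁻ x, ‖dL n p.1 u x‖ₑ * ‖dL n p.2 v x‖ₑ), x ≤ Q := by
    intro x hx
    rw [List.mem_map] at hx
    obtain ⟨p, hp, rfl⟩ := hx
    have hc := splits_count _ p hp
    have hN : ∀ l, NS n r S l ≤ ⌈r l + 2⌉₊ := fun l => by
      unfold NS; split_ifs <;> simp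
    refine hQ _ _ (fun l => ?_) (fun l => ?_)
    · exact ((hc l).1.trans (LA_count n _ l).le).trans (hN l)
    · exact ((hc l).2.trans (LA_count n _ l).le).trans (hN l)
  have := List.sum_le_card_nsmul _ _ this
  simpa using this
def sc (n : ℕ) (a : Fin n → ℝ) (t : ℝ) (i : Fin n) : ℝ := (2 : ℝ) ^ (t * a i)

lemma sc_pos (n : ℕ) (a : Fin n → ℝ) (t : ℝ) (i : Fin n) : 0 < sc n a t i := by
  unfold sc; positivity

lemma sc_inv_mul (n : ℕ) (a : Fin n → ℝ) (t t' : ℝ) (i : Fin n) (x : ℝ) :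
    (sc n a t i)⁻¹ * (sc n a t' i * x) = sc n a (-(t - t')) i * x := by
  rw [← mul_assoc, sc, sc, sc, ← Real.rpow_neg (by norm_num), ← Real.rpow_add (by norm_num)]
  congr 2; ring

lemma fam_eq (n : ℕ) (a : Fin n → ℝ) (φ0 φ : SchwartzMap (RV n) ℂ) (j : ℕ) :
    fam n a φ0 φ j = ⇑(Sc n (sc n a j) (sc_pos n a j) (if j = 0 then φ0 else φ)) := by
  ext x
  rw [Sc_apply]
  have hp : ∏ i, sc n a j i = (2 : ℝ) ^ ((j : ℝ) * ∑ i, a i) := by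
    simp only [sc]
    rw [← Real.rpow_sum_of_pos (by norm_num), Finset.mul_sum]
  rw [hp]
  cases j with
  | zero => simp [fam, sc]
  | succ j => simp [fam, sc]

lemma unif (n : ℕ) (K : ℕ) (P : List (Fin n) → ℝ≥0∞ → Prop)
    (hm : ∀ L c c', c ≤ c' → P L c → P L c') (hP : ∀ L, ∃ c, c ≠ ∞ ∧ P L c) :
    ∃ c, c ≠ ∞ ∧ ∀ L : List (Fin n), L.length ≤ K → P L c := by
  choose c hc hPc using hP
  have hf := List.finite_length_le (Fin n) K
  refine ⟨∑ L ∈ hf.toFinset, c L, (ENNReal.sum_lt_top.2 fun L _ => (hc L).lt_top).ne, ?_⟩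
  intro L hL
  refine hm L _ _ ?_ (hPc L)
  exact Finset.single_le_sum (f := c) (fun _ _ => zero_le) (by simpa using hL)

lemma int_fin (n m : ℕ) (g : SchwartzMap (RV n) ℂ) :
    ∫⁻ ξ : RV n, ENNReal.ofReal ((((n : ℝ) + 1) * (1 + ‖ξ‖)) ^ m) * ‖g ξ‖ₑ ≠ ∞ := by
  have hi : Integrable (fun ξ : RV n => (((n : ℝ) + 1) ^ m * 2 ^ (m - 1)) *
      (‖ξ‖ ^ 0 * ‖g ξ‖ + ‖ξ‖ ^ m * ‖g ξ‖)) :=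
    ((g.integrable_pow_mul volume 0).add (g.integrable_pow_mul volume m)).const_mul _
  refine (lt_of_le_of_lt (lintegral_mono fun ξ => ?_) hi.lintegral_lt_top).ne
  rw [← ofReal_norm, ← ENNReal.ofReal_mul (by positivity)]
  refine ENNReal.ofReal_le_ofReal ?_
  rw [← add_mul, ← mul_assoc, mul_pow]
  refine mul_le_mul_of_nonneg_right ?_ (norm_nonneg _)
  rw [mul_assoc]
  refine mul_le_mul_of_nonneg_left ?_ (by positivity)
  have := add_pow_le (zero_le_one (α := ℝ)) (norm_nonneg ξ) m
  simpa using this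

lemma prod_sc_le (n : ℕ) (a : Fin n → ℝ) (t : ℝ) (ht : 0 ≤ t) (L : List (Fin n)) :
    (L.map (sc n a (-t))).prod ≤ ((2 : ℝ) ^ (-t * ⨅ i, a i)) ^ L.length := by
  induction L with
  | nil => simp
  | cons i L ih =>
    rw [List.map_cons, List.prod_cons, List.length_cons, pow_succ']
    refine mul_le_mul ?_ ih ?_ (by positivity)
    · unfold sc
      apply Real.rpow_le_rpow_of_exponent_le (by norm_num)
      have : ⨅ i, a i ≤ a i := ciInf_le (Set.finite_range a).bddBelow i
      nlinarith
    · apply List.prod_nonneg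
      simp only [List.mem_map]
      rintro _ ⟨i, _, rfl⟩
      exact (sc_pos n a _ i).le

lemma rho_le (n : ℕ) (hn : 1 ≤ n) (a : Fin n → ℝ) (ha : ∀ i, 1 ≤ a i) (t : ℝ) (ht : 0 ≤ t) :
    (2 : ℝ) ^ (-t * ⨅ i, a i) ≤ 1 := by
  have : Nonempty (Fin n) := ⟨⟨0, hn⟩⟩
  have h1 : 1 ≤ ⨅ i, a i := le_ciInf ha
  apply Real.rpow_le_one_of_one_le_of_nonpos (by norm_num)
  nlinarith

lemma norm_sc_le (n : ℕ) (a : Fin n → ℝ) (t : ℝ) (ht : 0 ≤ t) (x : RV n) :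
    ‖(fun i => sc n a (-t) i * x i : RV n)‖ ≤ (2 : ℝ) ^ (-t * ⨅ i, a i) * ‖x‖ := by
  rw [pi_norm_le_iff_of_nonneg (by positivity)]
  intro i
  rw [norm_mul, Real.norm_of_nonneg (sc_pos n a _ i).le]
  gcongr
  · have := prod_sc_le n a t ht [i]
    simpa using this
  · exact norm_le_pi_norm x i

lemma C1pt (n : ℕ) (hn : 1 ≤ n) (a : Fin n → ℝ) (ha : ∀ i, 1 ≤ a i) (m : ℕ)
    (u : SchwartzMap (RV n) ℂ) (A : ℝ) (hA0 : 0 ≤ A) (t : ℝ) (ht : 0 ≤ t)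
    (hA : ∀ L : List (Fin n), L.length ≤ m → ∀ ξ, ‖dL n L u ξ‖ ≤ A)
    (hmom : t = 0 ∨ ∀ L : List (Fin n), L.length < m → dL n L u 0 = 0)
    (L : List (Fin n)) (hL : ∀ ξ, ‖dL n L u ξ‖ ≤ A) (ξ : RV n) :
    ‖dL n L (dilS n (sc n a (-t)) (sc_pos n a _) u) ξ‖ ≤
      ((2 : ℝ) ^ (-t * ⨅ i, a i)) ^ m * (((n : ℝ) + 1) * (1 + ‖ξ‖)) ^ m * A := by
  rw [dL_dilS_enorm]
  have h1 := prod_sc_le n a t ht L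
  have h2 := rho_le n hn a ha t ht
  have h3 := norm_sc_le n a t ht ξ
  set ρ := (2 : ℝ) ^ (-t * ⨅ i, a i) with hρ
  have hρ0 : 0 < ρ := by positivity
  have hP : 1 ≤ ((n : ℝ) + 1) * (1 + ‖ξ‖) := by
    have : (0:ℝ) ≤ n := by positivity
    nlinarith [norm_nonneg ξ]
  have hPm := one_le_pow₀ (n := m) hP
  by_cases hc : t = 0 ∨ m ≤ L.length
  · have h4 : ρ ^ L.length ≤ ρ ^ m := by
      rcases hc with hc | hc
      · have : ρ = 1 := by rw [hρ, hc]; simp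
        simp [this]
      · exact pow_le_pow_of_le_one hρ0.le h2 hc
    calc _ ≤ ρ ^ m * A := mul_le_mul (h1.trans h4) (hL _) (norm_nonneg _) (by positivity)
      _ = ρ ^ m * 1 * A := by ring
      _ ≤ _ := by gcongr
  · push Not at hc
    have hm := hmom.resolve_left hc.1
    have ht := taylor n u m A hA0 hm (fun L hL => hA L hL.le) (m - L.length) L (by omega)
      (fun i => sc n a (-t) i * ξ i)
    have h5 : (n * ‖(fun i => sc n a (-t) i * ξ i : RV n)‖) ^ (m - L.length) ≤
        ρ ^ (m - L.length) * (((n : ℝ) + 1) * (1 + ‖ξ‖)) ^ m := by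
      calc _ ≤ ((n : ℝ) * (ρ * ‖ξ‖)) ^ (m - L.length) := by gcongr
        _ = ρ ^ (m - L.length) * ((n : ℝ) * ‖ξ‖) ^ (m - L.length) := by rw [← mul_pow]; ring
        _ ≤ ρ ^ (m - L.length) * (((n : ℝ) + 1) * (1 + ‖ξ‖)) ^ (m - L.length) := by
            gcongr <;> linarith
        _ ≤ _ := by
            gcongr
            omega
    calc _ ≤ ρ ^ L.length * ((ρ ^ (m - L.length) * (((n : ℝ) + 1) * (1 + ‖ξ‖)) ^ m) * A) := by
          refine mul_le_mul h1 (ht.trans ?_) (norm_nonneg _) (by positivity)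
          gcongr
      _ = (ρ ^ L.length * ρ ^ (m - L.length)) * (((n : ℝ) + 1) * (1 + ‖ξ‖)) ^ m * A := by ring
      _ = _ := by rw [← pow_add]; congr 3; omega

lemma len_le (n : ℕ) (N : Fin n → ℕ) (L : List (Fin n)) (h : ∀ l, L.count l ≤ N l) :
    L.length ≤ ∑ l, N l := by
  rw [← sum_count]; exact Finset.sum_le_sum fun l _ => h l

lemma C1 (n : ℕ) (hn : 1 ≤ n) (a : Fin n → ℝ) (ha : ∀ i, 1 ≤ a i) (m : ℕ) (N : Fin n → ℕ)
    (v : SchwartzMap (RV n) ℂ) : ∃ c : ℝ≥0∞, c ≠ ∞ ∧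
    ∀ (u : SchwartzMap (RV n) ℂ) (A : ℝ≥0∞) (t : ℝ), 0 ≤ t →
    (∀ L : List (Fin n), L.length ≤ m ∨ (∀ l, L.count l ≤ N l) → ∀ ξ, ‖dL n L u ξ‖ₑ ≤ A) →
    (t = 0 ∨ ∀ L : List (Fin n), L.length < m → dL n L u 0 = 0) →
    ∀ L1 L2 : List (Fin n), (∀ l, L1.count l ≤ N l) → (∀ l, L2.count l ≤ N l) →
    ∫⁻ x, ‖dL n L1 (dilS n (sc n a (-t)) (sc_pos n a _) u) x‖ₑ * ‖dL n L2 v x‖ₑ ≤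
      c * A * ENNReal.ofReal (((2 : ℝ) ^ (-t * ⨅ i, a i)) ^ m) := by
  obtain ⟨c, hc, hcL⟩ := unif n (∑ l, N l) (fun L c =>
    ∫⁻ ξ : RV n, ENNReal.ofReal ((((n : ℝ) + 1) * (1 + ‖ξ‖)) ^ m) * ‖dL n L v ξ‖ₑ ≤ c)
    (fun L c c' h h' => h'.trans h) (fun L => ⟨_, int_fin n m _, le_rfl⟩)
  refine ⟨c + 1, by simp [hc], ?_⟩
  intro u A t ht hA hmom L1 L2 hL1 hL2
  by_cases hAt : A = ∞
  · have : (c + 1) * A * ENNReal.ofReal (((2 : ℝ) ^ (-t * ⨅ i, a i)) ^ m) = ∞ := by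
      rw [hAt, ENNReal.mul_top (by simp), ENNReal.top_mul]
      have : 0 < ((2 : ℝ) ^ (-t * ⨅ i, a i)) ^ m := by positivity
      simpa using this
    rw [this]; exact le_top
  have hA' : ∀ L : List (Fin n), L.length ≤ m ∨ (∀ l, L.count l ≤ N l) →
      ∀ ξ, ‖dL n L u ξ‖ ≤ A.toReal := by
    intro L hL ξ
    have := ENNReal.toReal_mono hAt (hA L hL ξ)
    simpa using this
  have hpt := C1pt n hn a ha m u A.toReal ENNReal.toReal_nonneg t ht
    (fun L hL => hA' L (Or.inl hL)) hmom L1 (hA' L1 (Or.inr hL1))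
  calc _ ≤ ∫⁻ ξ : RV n, (ENNReal.ofReal (((2 : ℝ) ^ (-t * ⨅ i, a i)) ^ m) * A) *
        (ENNReal.ofReal ((((n : ℝ) + 1) * (1 + ‖ξ‖)) ^ m) * ‖dL n L2 v ξ‖ₑ) := by
        refine lintegral_mono fun ξ => ?_
        have := ENNReal.ofReal_le_ofReal (hpt ξ)
        rw [ofReal_norm, ENNReal.ofReal_mul (by positivity), ENNReal.ofReal_mul (by positivity),
          ENNReal.ofReal_toReal hAt] at this
        calc _ ≤ _ * ‖dL n L2 v ξ‖ₑ := mul_le_mul' this le_rfl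
          _ = _ := by ring
    _ ≤ (ENNReal.ofReal (((2 : ℝ) ^ (-t * ⨅ i, a i)) ^ m) * A) * c := by
        rw [lintegral_const_mul' _ _ (ENNReal.mul_ne_top ENNReal.ofReal_ne_top hAt)]
        exact mul_le_mul' le_rfl (hcL L2 (len_le n N L2 hL2))
    _ ≤ (ENNReal.ofReal (((2 : ℝ) ^ (-t * ⨅ i, a i)) ^ m) * A) * (c + 1) :=
        mul_le_mul' le_rfl le_self_add
    _ = _ := by ring

lemma tsupport_dL (n : ℕ) (L : List (Fin n)) (u : SchwartzMap (RV n) ℂ) :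
    tsupport (dL n L u) ⊆ tsupport u := by
  induction L with
  | nil => exact subset_rfl
  | cons i L ih => exact (SchwartzMap.tsupport_lineDerivOp_subset _ _).trans ih

lemma C2pt (n q : ℕ) (w : SchwartzMap (RV n) ℂ) (hw : (0 : RV n) ∉ tsupport w) :
    ∃ c : ℝ≥0∞, c ≠ ∞ ∧ ∀ η : RV n, ‖w η‖ₑ ≤ c * ENNReal.ofReal (‖η‖ ^ q) := by
  rw [notMem_tsupport_iff_eventuallyEq] at hw
  obtain ⟨δ, hδ, hb⟩ := Metric.eventually_nhds_iff.1 hw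
  refine ⟨ENNReal.ofReal (SchwartzMap.seminorm ℝ 0 0 w * (δ⁻¹) ^ q), ENNReal.ofReal_ne_top, fun η => ?_⟩
  have hs : 0 ≤ SchwartzMap.seminorm ℝ 0 0 w := apply_nonneg _ _
  rw [← ENNReal.ofReal_mul (by positivity), ← ofReal_norm]
  refine ENNReal.ofReal_le_ofReal ?_
  by_cases h : ‖η‖ < δ
  · have : w η = 0 := hb (by simpa using h)
    rw [this, norm_zero]; positivity
  · push Not at h
    have h1 : 1 ≤ (δ⁻¹ * ‖η‖) ^ q := by
      apply one_le_pow₀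
      rw [inv_mul_eq_div, le_div_iff₀ hδ]; linarith
    calc _ ≤ SchwartzMap.seminorm ℝ 0 0 w * 1 := by
          rw [mul_one]; exact SchwartzMap.norm_le_seminorm ℝ w η
      _ ≤ SchwartzMap.seminorm ℝ 0 0 w * (δ⁻¹ * ‖η‖) ^ q := by gcongr
      _ = _ := by rw [mul_pow]; ring

lemma C2 (n : ℕ) (hn : 1 ≤ n) (a : Fin n → ℝ) (ha : ∀ i, 1 ≤ a i) (q : ℕ) (N : Fin n → ℕ)
    (v : SchwartzMap (RV n) ℂ) (hv : (0 : RV n) ∉ tsupport v) : ∃ c : ℝ≥0∞, c ≠ ∞ ∧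
    ∀ (u : SchwartzMap (RV n) ℂ) (B : ℝ≥0∞) (t : ℝ), 0 ≤ t →
    (∀ L : List (Fin n), (∀ l, L.count l ≤ N l) →
      ∫⁻ ξ : RV n, ENNReal.ofReal ((1 + Real.sqrt (∑ i, ξ i ^ 2)) ^ q) * ‖dL n L u ξ‖ₑ ≤ B) →
    ∀ L1 L2 : List (Fin n), (∀ l, L1.count l ≤ N l) → (∀ l, L2.count l ≤ N l) →
    ∫⁻ x, ‖dL n L1 u x‖ₑ * ‖dL n L2 (dilS n (sc n a (-t)) (sc_pos n a _) v) x‖ₑ ≤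
      c * B * ENNReal.ofReal (((2 : ℝ) ^ (-t * ⨅ i, a i)) ^ q) := by
  obtain ⟨c, hc, hcL⟩ := unif n (∑ l, N l) (fun L c =>
    ∀ η : RV n, ‖dL n L v η‖ₑ ≤ c * ENNReal.ofReal (‖η‖ ^ q))
    (fun L c c' h h' η => (h' η).trans (mul_le_mul' h le_rfl))
    (fun L => C2pt n q (dL n L v) (fun h => hv (tsupport_dL n L v h)))
  refine ⟨c, hc, ?_⟩
  intro u B t ht hB L1 L2 hL1 hL2
  have hpt : ∀ ξ : RV n, ‖dL n L2 (dilS n (sc n a (-t)) (sc_pos n a _) v) ξ‖ₑ ≤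
      c * ENNReal.ofReal (((2 : ℝ) ^ (-t * ⨅ i, a i)) ^ q) *
        ENNReal.ofReal ((1 + Real.sqrt (∑ i, ξ i ^ 2)) ^ q) := by
    intro ξ
    have h1 := (prod_sc_le n a t ht L2).trans (pow_le_one₀ (by positivity) (rho_le n hn a ha t ht))
    have h3 := norm_sc_le n a t ht ξ
    have h4 : ‖ξ‖ ≤ 1 + Real.sqrt (∑ i, ξ i ^ 2) := by
      rw [pi_norm_le_iff_of_nonneg (by positivity)]
      intro i
      have : ‖ξ i‖ ≤ Real.sqrt (∑ i, ξ i ^ 2) := by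
        rw [Real.norm_eq_abs]
        apply Real.abs_le_sqrt
        exact Finset.single_le_sum (f := fun i => ξ i ^ 2) (fun _ _ => sq_nonneg _) (Finset.mem_univ i)
      linarith
    calc _ ≤ ‖dL n L2 v (fun i => sc n a (-t) i * ξ i)‖ₑ := by
          rw [← ofReal_norm, ← ofReal_norm, dL_dilS_enorm]
          refine ENNReal.ofReal_le_ofReal ?_
          exact mul_le_of_le_one_left (norm_nonneg _) h1
      _ ≤ c * ENNReal.ofReal (‖(fun i => sc n a (-t) i * ξ i : RV n)‖ ^ q) :=
          hcL L2 (len_le n N L2 hL2) _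
      _ ≤ c * ENNReal.ofReal ((((2 : ℝ) ^ (-t * ⨅ i, a i)) * (1 + Real.sqrt (∑ i, ξ i ^ 2))) ^ q) := by
          refine mul_le_mul' le_rfl (ENNReal.ofReal_le_ofReal ?_)
          refine pow_le_pow_left₀ (norm_nonneg _) (h3.trans ?_) _
          gcongr
      _ = _ := by
          rw [mul_pow, ENNReal.ofReal_mul (by positivity), mul_assoc]
  calc _ ≤ ∫⁻ ξ : RV n, (c * ENNReal.ofReal (((2 : ℝ) ^ (-t * ⨅ i, a i)) ^ q)) *
        (ENNReal.ofReal ((1 + Real.sqrt (∑ i, ξ i ^ 2)) ^ q) * ‖dL n L1 u ξ‖ₑ) := by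
        refine lintegral_mono fun ξ => ?_
        calc _ ≤ ‖dL n L1 u ξ‖ₑ * _ := mul_le_mul' le_rfl (hpt ξ)
          _ = _ := by ring
    _ ≤ (c * ENNReal.ofReal (((2 : ℝ) ^ (-t * ⨅ i, a i)) ^ q)) * B := by
        rw [lintegral_const_mul' _ _ (ENNReal.mul_ne_top hc ENNReal.ofReal_ne_top)]
        exact mul_le_mul' le_rfl (hB L1 hL1)
    _ = _ := by ring

lemma wt_scale (n : ℕ) (a r : Fin n → ℝ) (ha : ∀ i, 1 ≤ a i) (hr : ∀ l, 0 < r l) (j k : ℕ) (hjk : j ≤ k)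
    (z : RV n) :
    ∏ l, ENNReal.ofReal ((1 + (2:ℝ) ^ ((k:ℝ) * a l) * |z l|) ^ (r l)) ≤
      ENNReal.ofReal ((2:ℝ) ^ (((k:ℝ) - j) * ∑ l, a l * r l)) *
        ∏ l, ENNReal.ofReal ((1 + sc n a j l * |z l|) ^ (r l)) := by
  have hkj : (0:ℝ) ≤ (k:ℝ) - j := by
    have : (j:ℝ) ≤ k := by exact_mod_cast hjk
    linarith
  have e : (2:ℝ) ^ (((k:ℝ) - j) * ∑ l, a l * r l) = ∏ l, (2:ℝ) ^ (((k:ℝ) - j) * (a l * r l)) := by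
    rw [← Real.rpow_sum_of_pos (by norm_num), Finset.mul_sum]
  have hsp := sc_pos n a j
  rw [e, ENNReal.ofReal_prod_of_nonneg (fun _ _ => by positivity), ← Finset.prod_mul_distrib]
  refine Finset.prod_le_prod' fun l _ => ?_
  have hl := hsp l
  rw [← ENNReal.ofReal_mul (by positivity)]
  refine ENNReal.ofReal_le_ofReal ?_
  rw [← mul_assoc, Real.rpow_mul (by norm_num) (((k:ℝ) - j) * a l), ← Real.mul_rpow (by positivity) (by positivity)]
  refine Real.rpow_le_rpow (by positivity) ?_ (hr l).le
  have h1 : (1:ℝ) ≤ (2:ℝ) ^ (((k:ℝ) - j) * a l) :=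
    Real.one_le_rpow (by norm_num) (mul_nonneg hkj (by linarith [ha l]))
  have h2 : (2:ℝ) ^ ((k:ℝ) * a l) = (2:ℝ) ^ (((k:ℝ) - j) * a l) * sc n a j l := by
    rw [sc, ← Real.rpow_add (by norm_num)]; congr 1; ring
  rw [h2]
  nlinarith

lemma sup_bd (n : ℕ) (r : Fin n → ℝ) (Mψ : ℤ) (hMψ : -1 ≤ Mψ) (ψ : SchwartzMap (RV n) ℂ) (A : ℝ≥0∞)
    (hA : A = (⨆ α : {α : Fin n → ℕ // (∑ i, (α i : ℤ)) ≤ Mψ + 1 ∨ ∀ l, α l ≤ ⌈r l + 2⌉₊},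
              ⨆ ξ : RV n, (‖Dop n α.1 (FT n ⇑ψ) ξ‖₊ : ℝ≥0∞)))
    (L : List (Fin n)) (hL : L.length ≤ (Mψ + 1).toNat ∨ ∀ l, L.count l ≤ ⌈r l + 2⌉₊) (ξ : RV n) :
    ‖dL n L (FTs n ψ) ξ‖ₑ ≤ A := by
  have hα : (∑ i, ((fun i => L.count i : Fin n → ℕ) i : ℤ)) ≤ Mψ + 1 ∨
      ∀ l, (fun i => L.count i : Fin n → ℕ) l ≤ ⌈r l + 2⌉₊ := by
    refine hL.imp (fun h => ?_) id
    have e := sum_count n L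
    have e' : (∑ i, ((L.count i : ℕ) : ℤ)) = (L.length : ℤ) := by exact_mod_cast e
    show (∑ i, ((L.count i : ℕ) : ℤ)) ≤ Mψ + 1
    rw [e']
    omega
  rw [dL_enorm, FTs_coe, hA]
  exact le_iSup_of_le (ι := {α : Fin n → ℕ // (∑ i, (α i : ℤ)) ≤ Mψ + 1 ∨ ∀ l, α l ≤ ⌈r l + 2⌉₊})
    ⟨fun i => L.count i, hα⟩ (le_iSup_of_le ξ le_rfl)

lemma mom_bd (n : ℕ) (Mψ : ℤ) (hMψ : -1 ≤ Mψ) (ψ : SchwartzMap (RV n) ℂ)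
    (h : MomentCond n Mψ ψ) (L : List (Fin n)) (hL : L.length < (Mψ + 1).toNat) :
    dL n L (FTs n ψ) 0 = 0 := by
  have e := sum_count n L
  have e' : (∑ i, ((L.count i : ℕ) : ℤ)) = (L.length : ℤ) := by exact_mod_cast e
  have h1 := h (fun i => L.count i) (by
    show (∑ i, ((L.count i : ℕ) : ℤ)) ≤ Mψ
    rw [e']; omega)
  have h2 := dL_enorm n L (FTs n ψ) 0
  rw [FTs_coe, h1] at h2
  simpa using h2

lemma int_bd (n : ℕ) (r : Fin n → ℝ) (M : ℤ) (hM : -1 ≤ M) (ψ : SchwartzMap (RV n) ℂ) (B : ℝ≥0∞)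
    (hB : B = (⨆ γ : {γ : Fin n → ℕ // ∀ l, γ l ≤ ⌈r l + 2⌉₊},
              ∫⁻ ξ : RV n,
                ENNReal.ofReal ((1 + Real.sqrt (∑ i, ξ i ^ 2)) ^ ((M:ℝ) + 1)) *
                  (‖Dop n γ.1 (FT n ⇑ψ) ξ‖₊ : ℝ≥0∞)))
    (L : List (Fin n)) (hL : ∀ l, L.count l ≤ ⌈r l + 2⌉₊) :
    ∫⁻ ξ : RV n, ENNReal.ofReal ((1 + Real.sqrt (∑ i, ξ i ^ 2)) ^ (M + 1).toNat) *
      ‖dL n L (FTs n ψ) ξ‖ₑ ≤ B := by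
  have hq : (M : ℝ) + 1 = ((M + 1).toNat : ℝ) := by
    have : (((M + 1).toNat : ℤ) : ℝ) = ((M + 1 : ℤ) : ℝ) := by rw [Int.toNat_of_nonneg (by omega)]
    push_cast at this
    exact this.symm
  rw [hB]
  refine le_iSup_of_le (ι := {γ : Fin n → ℕ // ∀ l, γ l ≤ ⌈r l + 2⌉₊})
    ⟨fun i => L.count i, hL⟩ (le_of_eq ?_)
  refine lintegral_congr fun ξ => ?_
  rw [hq, Real.rpow_natCast, dL_enorm, FTs_coe]

lemma FT_id (n : ℕ) (a : Fin n → ℝ) (Ψ Λ : SchwartzMap (RV n) ℂ) (j k t : ℝ) (ξ : RV n) :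
    FTs n (convS n (Sc n (sc n a j) (sc_pos n a j) Ψ) (Sc n (sc n a k) (sc_pos n a k) Λ))
      (fun i => sc n a t i * ξ i) =
    FTs n Ψ (fun i => sc n a (-(j - t)) i * ξ i) * FTs n Λ (fun i => sc n a (-(k - t)) i * ξ i) := by
  rw [FTs_convS, FTs_Sc, FTs_Sc]
  simp only [sc_inv_mul]

lemma sc_self (n : ℕ) (a : Fin n → ℝ) (t : ℝ) (ξ : RV n) :
    (fun i => sc n a (-(t - t)) i * ξ i) = ξ := by
  ext i; simp [sc]

lemma cmpE (K c X A S : ℝ≥0∞) (hX : X ≠ ∞) (hc : K * c ≤ X) (hA : A ≤ S) (R : ℝ≥0∞) :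
    K * (c * A * R) ≤ ENNReal.ofReal (X.toReal + 1) * S * R := by
  have : X ≤ ENNReal.ofReal (X.toReal + 1) := by
    rw [← ENNReal.ofReal_toReal hX]
    refine ENNReal.ofReal_le_ofReal ?_
    rw [ENNReal.toReal_ofReal (by positivity)]
    linarith
  calc K * (c * A * R) = (K * c) * A * R := by ring
    _ ≤ _ := by
      gcongr
      exact hc.trans this

/-- Lemma 3.7 (estimates of the auxiliary integrals `I_{j,k}`). -/
theorem stmt10 (n : ℕ) (hn : 1 ≤ n) (a : Fin n → ℝ) (ha : ∀ i, 1 ≤ a i)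
    (anorm : RV n → ℝ) (h : IsAnorm n a anorm)
    (ε : ℝ) (hε : 0 < ε) (Mψ M : ℤ) (hMψ : -1 ≤ Mψ) (hM : -1 ≤ M)
    (r : Fin n → ℝ) (hr : ∀ l, 0 < r l)
    (lam0 lam : SchwartzMap (RV n) ℂ)
    (hl0 : tsupport (FT n ⇑lam0) ⊆ {ξ : RV n | anorm ξ < 2 * ε})
    (hl : tsupport (FT n ⇑lam) ⊆ {ξ : RV n | ε / 2 < anorm ξ ∧ anorm ξ < 2 * ε}) :
    ∃ c : ℝ, 0 < c ∧
      ∀ ψ0 ψ : SchwartzMap (RV n) ℂ, MomentCond n Mψ (⇑ψ) →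
      ∀ A B C D : ℝ≥0∞,
        A = (⨆ α : {α : Fin n → ℕ // (∑ i, (α i : ℤ)) ≤ Mψ + 1 ∨ ∀ l, α l ≤ ⌈r l + 2⌉₊},
              ⨆ ξ : RV n, (‖Dop n α.1 (FT n ⇑ψ) ξ‖₊ : ℝ≥0∞)) →
        B = (⨆ γ : {γ : Fin n → ℕ // ∀ l, γ l ≤ ⌈r l + 2⌉₊},
              ∫⁻ ξ : RV n,
                ENNReal.ofReal ((1 + Real.sqrt (∑ i, ξ i ^ 2)) ^ ((M:ℝ) + 1)) *
                  (‖Dop n γ.1 (FT n ⇑ψ) ξ‖₊ : ℝ≥0∞)) →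
        C = (⨆ α : {α : Fin n → ℕ // (∑ i, (α i : ℤ)) ≤ Mψ + 1 ∨ ∀ l, α l ≤ ⌈r l + 2⌉₊},
              ⨆ ξ : RV n, (‖Dop n α.1 (FT n ⇑ψ0) ξ‖₊ : ℝ≥0∞)) →
        D = (⨆ γ : {γ : Fin n → ℕ // ∀ l, γ l ≤ ⌈r l + 2⌉₊},
              ∫⁻ ξ : RV n,
                ENNReal.ofReal ((1 + Real.sqrt (∑ i, ξ i ^ 2)) ^ ((M:ℝ) + 1)) *
                  (‖Dop n γ.1 (FT n ⇑ψ0) ξ‖₊ : ℝ≥0∞)) →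
        ∀ j k : ℕ,
          (k ≤ j →
            (∫⁻ z : RV n,
                (‖conv2 n (fam n a ⇑ψ0 ⇑ψ j) (fam n a ⇑lam0 ⇑lam k) z‖₊ : ℝ≥0∞) *
                  ∏ l, ENNReal.ofReal ((1 + (2:ℝ) ^ ((k:ℝ) * a l) * |z l|) ^ (r l)))
              ≤ ENNReal.ofReal c * (A + B + C + D) *
                  ENNReal.ofReal ((2:ℝ) ^ (((k:ℝ) - (j:ℝ)) * ((Mψ:ℝ) + 1) * ⨅ i, a i))) ∧
          (j ≤ k →
            (∫⁻ z : RV n,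
                (‖conv2 n (fam n a ⇑ψ0 ⇑ψ j) (fam n a ⇑lam0 ⇑lam k) z‖₊ : ℝ≥0∞) *
                  ∏ l, ENNReal.ofReal ((1 + (2:ℝ) ^ ((k:ℝ) * a l) * |z l|) ^ (r l)))
              ≤ ENNReal.ofReal c * (A + B + C + D) *
                  ENNReal.ofReal
                    ((2:ℝ) ^ (-(((k:ℝ) - (j:ℝ)) *
                      (((M:ℝ) + 1) * (⨅ i, a i) - ∑ l, a l * r l))))) := by
  obtain ⟨K, hK, hK2⟩ := K2 n r
  obtain ⟨c1, hc1, hC1⟩ := C1 n hn a ha (Mψ + 1).toNat (fun l => ⌈r l + 2⌉₊) (FTs n lam0)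
  obtain ⟨c1', hc1', hC1'⟩ := C1 n hn a ha (Mψ + 1).toNat (fun l => ⌈r l + 2⌉₊) (FTs n lam)
  have hv : (0 : RV n) ∉ tsupport (FTs n lam) := by
    rw [FTs_coe]
    intro h0
    have h1 := (hl h0).1
    rw [h.1] at h1
    linarith
  obtain ⟨c2, hc2, hC2⟩ := C2 n hn a ha (M + 1).toNat (fun l => ⌈r l + 2⌉₊) (FTs n lam) hv
  have hXt : K * (c1 + c1' + c2) ≠ ∞ :=
    ENNReal.mul_ne_top hK (ENNReal.add_ne_top.2 ⟨ENNReal.add_ne_top.2 ⟨hc1, hc1'⟩, hc2⟩)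
  refine ⟨(K * (c1 + c1' + c2)).toReal + 1, by positivity, ?_⟩
  intro ψ0 ψ hmom A B C D hA hB hC hD j k
  have hK1 : K * c1 ≤ K * (c1 + c1' + c2) := by
    gcongr; rw [add_assoc]; exact le_self_add
  have hK1' : K * c1' ≤ K * (c1 + c1' + c2) := by
    gcongr; exact le_add_self.trans le_self_add
  have hK2' : K * c2 ≤ K * (c1 + c1' + c2) := by
    gcongr; exact le_add_self
  have hAS : A ≤ A + B + C + D := by
    rw [add_assoc, add_assoc]; exact le_self_add
  have hBS : B ≤ A + B + C + D := by
    rw [add_assoc]; exact le_add_self.trans le_self_add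
  have hCS : C ≤ A + B + C + D := le_add_self.trans le_self_add
  have hDS : D ≤ A + B + C + D := le_add_self
  set X := K * (c1 + c1' + c2) with hX
  have hmr : (Mψ : ℝ) + 1 = ((Mψ + 1).toNat : ℝ) := by
    have : (((Mψ + 1).toNat : ℤ) : ℝ) = ((Mψ + 1 : ℤ) : ℝ) := by
      rw [Int.toNat_of_nonneg (by omega)]
    push_cast at this
    exact this.symm
  have hqr : (M : ℝ) + 1 = ((M + 1).toNat : ℝ) := by
    have : (((M + 1).toNat : ℤ) : ℝ) = ((M + 1 : ℤ) : ℝ) := by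
      rw [Int.toNat_of_nonneg (by omega)]
    push_cast at this
    exact this.symm
  have hconv : ∀ z, conv2 n (fam n a ⇑ψ0 ⇑ψ j) (fam n a ⇑lam0 ⇑lam k) z =
      convS n (Sc n (sc n a j) (sc_pos n a j) (if j = 0 then ψ0 else ψ))
        (Sc n (sc n a k) (sc_pos n a k) (if k = 0 then lam0 else lam)) z := by
    intro z
    rw [convS_apply, fam_eq, fam_eq]
  have hmain1 : k ≤ j →
            (∫⁻ z : RV n,
                (‖conv2 n (fam n a ⇑ψ0 ⇑ψ j) (fam n a ⇑lam0 ⇑lam k) z‖₊ : ℝ≥0∞) *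
                  ∏ l, ENNReal.ofReal ((1 + (2:ℝ) ^ ((k:ℝ) * a l) * |z l|) ^ (r l)))
              ≤ ENNReal.ofReal (X.toReal + 1) * (A + B + C + D) *
                  ENNReal.ofReal ((2:ℝ) ^ (((k:ℝ) - (j:ℝ)) * ((Mψ:ℝ) + 1) * ⨅ i, a i)) := by
    intro hkj
    have ht : (0:ℝ) ≤ (j:ℝ) - k := by
      have : (k:ℝ) ≤ j := by exact_mod_cast hkj
      linarith
    have hexp : (2:ℝ) ^ (((k:ℝ) - (j:ℝ)) * ((Mψ:ℝ) + 1) * ⨅ i, a i) =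
        ((2 : ℝ) ^ (-((j:ℝ) - k) * ⨅ i, a i)) ^ (Mψ + 1).toNat := by
      rw [← Real.rpow_natCast, ← Real.rpow_mul (by norm_num), ← hmr]
      congr 1; ring
    rw [hexp]
    simp only [hconv]
    -- data for `Ψ`
    obtain ⟨A', hA'S, hA'b, hA'm⟩ : ∃ A', A' ≤ A + B + C + D ∧
        (∀ L : List (Fin n), L.length ≤ (Mψ + 1).toNat ∨ (∀ l, L.count l ≤ ⌈r l + 2⌉₊) →
          ∀ ξ, ‖dL n L (FTs n (if j = 0 then ψ0 else ψ)) ξ‖ₑ ≤ A') ∧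
        ((j:ℝ) - k = 0 ∨ ∀ L : List (Fin n), L.length < (Mψ + 1).toNat →
          dL n L (FTs n (if j = 0 then ψ0 else ψ)) 0 = 0) := by
      by_cases hj : j = 0
      · refine ⟨C, hCS, ?_, Or.inl ?_⟩
        · rw [if_pos hj]
          exact sup_bd n r Mψ hMψ ψ0 C hC
        · have hk : k = 0 := by omega
          rw [hj, hk]; simp
      · rw [if_neg hj]
        exact ⟨A, hAS, sup_bd n r Mψ hMψ ψ A hA, Or.inr (mom_bd n Mψ hMψ ψ hmom)⟩
    obtain ⟨c', hc'X, hc'⟩ : ∃ c', K * c' ≤ X ∧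
        ∀ L1 L2 : List (Fin n), (∀ l, L1.count l ≤ ⌈r l + 2⌉₊) → (∀ l, L2.count l ≤ ⌈r l + 2⌉₊) →
        ∫⁻ x, ‖dL n L1 (dilS n (sc n a (-((j:ℝ) - k))) (sc_pos n a _)
            (FTs n (if j = 0 then ψ0 else ψ))) x‖ₑ *
          ‖dL n L2 (FTs n (if k = 0 then lam0 else lam)) x‖ₑ ≤
          c' * A' * ENNReal.ofReal (((2 : ℝ) ^ (-((j:ℝ) - k) * ⨅ i, a i)) ^ (Mψ + 1).toNat) := by
      by_cases hk : k = 0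
      · refine ⟨c1, hK1, ?_⟩
        have := hC1 _ A' _ ht hA'b hA'm
        rwa [if_pos hk]
      · refine ⟨c1', hK1', ?_⟩
        have := hC1' _ A' _ ht hA'b hA'm
        rwa [if_neg hk]
    refine (hK2 (sc n a k) (sc_pos n a k) _ _ _ _ (fun ξ => ?_) hc').trans
      (cmpE K c' X A' _ hXt hc'X hA'S _)
    rw [FT_id, sc_self, dilS_apply]
  refine ⟨hmain1, fun hjk => ?_⟩
  by_cases hk : k = 0
  · have hj : j = 0 := by omega
    have := hmain1 (by omega)
    subst hk; subst hj
    simpa using this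
  have ht : (0:ℝ) ≤ (k:ℝ) - j := by
    have : (j:ℝ) ≤ k := by exact_mod_cast hjk
    linarith
  have hexp : ENNReal.ofReal ((2:ℝ) ^ (-(((k:ℝ) - (j:ℝ)) *
      (((M:ℝ) + 1) * (⨅ i, a i) - ∑ l, a l * r l)))) =
      ENNReal.ofReal ((2:ℝ) ^ (((k:ℝ) - j) * ∑ l, a l * r l)) *
        ENNReal.ofReal (((2 : ℝ) ^ (-((k:ℝ) - j) * ⨅ i, a i)) ^ (M + 1).toNat) := by
    rw [← ENNReal.ofReal_mul (by positivity), ← Real.rpow_natCast, ← Real.rpow_mul (by norm_num),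
      ← hqr, ← Real.rpow_add (by norm_num)]
    congr 2; ring
  rw [hexp]
  simp only [hconv, if_neg hk]
  obtain ⟨B', hB'S, hB'b⟩ : ∃ B', B' ≤ A + B + C + D ∧
      ∀ L : List (Fin n), (∀ l, L.count l ≤ ⌈r l + 2⌉₊) →
      ∫⁻ ξ : RV n, ENNReal.ofReal ((1 + Real.sqrt (∑ i, ξ i ^ 2)) ^ (M + 1).toNat) *
        ‖dL n L (FTs n (if j = 0 then ψ0 else ψ)) ξ‖ₑ ≤ B' := by
    by_cases hj : j = 0
    · rw [if_pos hj]
      exact ⟨D, hDS, int_bd n r M hM ψ0 D hD⟩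
    · rw [if_neg hj]
      exact ⟨B, hBS, int_bd n r M hM ψ B hB⟩
  have hQ := hC2 _ B' _ ht hB'b
  have hfin := (hK2 (sc n a j) (sc_pos n a j)
    (convS n (Sc n (sc n a j) (sc_pos n a j) (if j = 0 then ψ0 else ψ))
        (Sc n (sc n a k) (sc_pos n a k) lam)) _ _ _ (fun ξ => by
      rw [FT_id, sc_self, dilS_apply]) hQ).trans
      (cmpE K c2 X B' _ hXt hK2' hB'S _)
  have hwt := wt_scale n a r ha hr j k hjk
  set h' := convS n (Sc n (sc n a j) (sc_pos n a j) (if j = 0 then ψ0 else ψ))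
        (Sc n (sc n a k) (sc_pos n a k) lam) with hh'
  set W := ENNReal.ofReal ((2:ℝ) ^ (((k:ℝ) - j) * ∑ l, a l * r l)) with hW
  have hWt : W ≠ ∞ := ENNReal.ofReal_ne_top
  calc _ ≤ ∫⁻ z : RV n, W * (‖h' z‖ₑ * ∏ l, ENNReal.ofReal ((1 + sc n a j l * |z l|) ^ (r l))) := by
        refine lintegral_mono fun z => ?_
        calc _ ≤ ‖h' z‖ₑ * (W * ∏ l, ENNReal.ofReal ((1 + sc n a j l * |z l|) ^ (r l))) :=
              mul_le_mul' le_rfl (hwt z)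
          _ = _ := by ring
    _ = W * ∫⁻ z : RV n, ‖h' z‖ₑ * ∏ l, ENNReal.ofReal ((1 + sc n a j l * |z l|) ^ (r l)) :=
        lintegral_const_mul' _ _ hWt
    _ ≤ W * _ := mul_le_mul' le_rfl hfin
    _ = _ := by ring
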